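/- Let ζ = e^{πi/6}, ω = e^{2πi/3}, let G_28 = F_4 ⊂ GL_4(C) be generated by the four order-2 reflections s(β_1), ..., s(β_4) with roots β_1 = e_1 − e_2, β_2 = e_2 − e_3, β_3 = √2 e_3, β_4 = −(1/√2)(e_1 + e_2 + e_3 + e_4), and let g = s(β_1)s(β_2)s(β_3)s(β_4) be the Coxeter element. Let E be the ζ^2-eigenspace of g^2, a 2-dimensional subspace, N_E = {s ∈ G_28 : s(E) ⊆ E}, and π_E restriction to E. Then there exists a C-linear isomorphism ψ : E → C^2 such that ψ ∘ π_E(N_E) ∘ ψ^{−1} = G_5, where G_5 ⊂ GL_2(C) is generated by r_1 = (ω/2)·[[−1−i, 1−i], [−1−i, −1+i]] and r_2' = (ω/2)·[[−1+i, 1−i], [−1−i, −1−i]]. In other words, the 6-reflection subquotient of G_28 = F_4 is isomorphic to G_5. -/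

import Mathlib

/-!
The square `c = g²` of the Coxeter element has minimal polynomial `X² - X + 1`, whose roots `ζ²` and
`conj ζ²` are not real. Hence a real matrix preserves the `ζ²`-eigenspace `E` if and only if it
commutes with `c`, and `N_E` is the centralizer of `c` in `W(F₄)`.

That centralizer is generated by two elements of order `3`. The group they generate contains `c` and
is transitive on the `24` short roots of `F₄`, so only the elements of the centralizer that fix `e₄`
remain. Such an element also fixes `c e₄` and is determined by its value at `e₁`, which is a short
root having the same inner products with `e₄` and `c e₄` as `e₁`. There are just three such short
roots, and the powers of the second generator already reach them from `e₁`. In a suitable basis of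
`E` the two generators act as `r₁` and `r₂'`.
-/

open Matrix MvPolynomial

namespace Paper

noncomputable section

/-- The standard Hermitian inner product `(v, w) = Σ v_i conj(w_i)` on `ℂ^N`. -/
def herm {N : ℕ} (v w : Fin N → ℂ) : ℂ := ∑ i, v i * (starRingEnd ℂ) (w i)

/-- The reflection `s(v, λ) : w ↦ w - (1 - λ) ((w,v)/(v,v)) v` with root `v` and
nontrivial eigenvalue `λ`, as a matrix. -/
def reflMat {N : ℕ} (v : Fin N → ℂ) (lam : ℂ) : Matrix (Fin N) (Fin N) ℂ :=
  Matrix.of fun i j =>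
    (if i = j then (1 : ℂ) else 0) - (1 - lam) * v i * (starRingEnd ℂ) (v j) / herm v v

/-- The monomial matrix `ι(θ, σ)` with `e_i ↦ θ_{σ(i)} e_{σ(i)}`. -/
def monomialMatrix {N : ℕ} (θ : Fin N → ℂ) (σ : Equiv.Perm (Fin N)) :
    Matrix (Fin N) (Fin N) ℂ :=
  Matrix.of fun j i => if j = σ i then θ (σ i) else 0

/-- The imprimitive reflection group `G(m, p, N)`: all monomial `N × N` matrices whose
nonzero entries are `m`-th roots of unity and whose product of nonzero entries is an
`(m/p)`-th root of unity. -/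
def Gimp (m p N : ℕ) : Set (Matrix (Fin N) (Fin N) ℂ) :=
  {M | ∃ (θ : Fin N → ℂ) (σ : Equiv.Perm (Fin N)),
    (∀ i, θ i ^ m = 1) ∧ (∏ i, θ i) ^ (m / p) = 1 ∧ M = monomialMatrix θ σ}

/-- The `μ`-eigenspace of (the linear map of) a matrix. -/
def eigSpace {n : ℕ} (M : Matrix (Fin n) (Fin n) ℂ) (μ : ℂ) : Submodule ℂ (Fin n → ℂ) :=
  Module.End.eigenspace M.mulVecLin μ

lemma reflMat_smul {N : ℕ} {c : ℂ} (hc : c ≠ 0) (v : Fin N → ℂ) (lam : ℂ) :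
    reflMat (c • v) lam = reflMat v lam := by
  have hherm : herm (c • v) (c • v) = c * starRingEnd ℂ c * herm v v := by
    simp only [herm, Pi.smul_apply, smul_eq_mul, map_mul, Finset.mul_sum]
    exact Finset.sum_congr rfl fun i _ => by ring
  have hcc : c * starRingEnd ℂ c ≠ 0 := mul_ne_zero hc ((map_ne_zero _).2 hc)
  ext i j
  simp only [reflMat, of_apply, hherm, Pi.smul_apply, smul_eq_mul, map_mul]
  congr 1
  rw [← mul_div_mul_left _ (herm v v) hcc]
  ring

lemma mem_eigSpace {n : ℕ} {M : Matrix (Fin n) (Fin n) ℂ} {μ : ℂ} {v : Fin n → ℂ} :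
    v ∈ eigSpace M μ ↔ M *ᵥ v = μ • v := by
  rw [eigSpace, Module.End.mem_eigenspace_iff, mulVecLin_apply]

lemma mulVec_mem_eigSpace_of_commute {n : ℕ} {A M : Matrix (Fin n) (Fin n) ℂ} {μ : ℂ}
    (h : Commute A M) {v : Fin n → ℂ} (hv : v ∈ eigSpace M μ) : A *ᵥ v ∈ eigSpace M μ := by
  rw [mem_eigSpace] at hv ⊢
  rw [mulVec_mulVec, ← h.eq, ← mulVec_mulVec, hv, mulVec_smul]

lemma sub_mul_mul_sub_eq_zero_of_mapsTo_eigSpace {n : ℕ} {A M : Matrix (Fin n) (Fin n) ℂ} {μ ν : ℂ}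
    (hM : (M - μ • 1) * (M - ν • 1) = 0)
    (hA : ∀ v ∈ eigSpace M μ, A *ᵥ v ∈ eigSpace M μ) :
    (M - μ • 1) * A * (M - ν • 1) = 0 := by
  have hker (v : Fin n → ℂ) : v ∈ eigSpace M μ ↔ (M - μ • 1) *ᵥ v = 0 := by
    rw [mem_eigSpace, sub_mulVec, smul_mulVec, one_mulVec, sub_eq_zero]
  refine Matrix.mulVec_injective (funext fun v => ?_)
  rw [zero_mulVec, ← mulVec_mulVec, ← mulVec_mulVec, ← hker]
  exact hA _ ((hker _).2 (by rw [mulVec_mulVec, hM, zero_mulVec]))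

/- Since `M - conj μ` maps onto the `μ`-eigenspace, `(M - μ) A (M - conj μ) = 0`; subtracting the
complex conjugate of this equation leaves `(μ - conj μ) (M A - A M) = 0`. -/
theorem commute_of_mapsTo_eigSpace {n : ℕ} {A M : Matrix (Fin n) (Fin n) ℂ} {μ : ℂ}
    (hμ : starRingEnd ℂ μ ≠ μ) (hM : (M - μ • 1) * (M - starRingEnd ℂ μ • 1) = 0)
    (hMreal : M.map (starRingEnd ℂ) = M) (hAreal : A.map (starRingEnd ℂ) = A)
    (hA : ∀ v ∈ eigSpace M μ, A *ᵥ v ∈ eigSpace M μ) : Commute A M := by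
  have h := sub_mul_mul_sub_eq_zero_of_mapsTo_eigSpace hM hA
  have hconj : (M - starRingEnd ℂ μ • 1) * A * (M - μ • 1) = 0 := by
    have := congrArg (starRingEnd ℂ).mapMatrix h
    simpa [RingHom.mapMatrix_apply, Matrix.map_sub, Matrix.map_smul', hMreal, hAreal] using this
  have hdiff : (starRingEnd ℂ μ - μ) • (A * M - M * A) = 0 := by
    rw [← sub_eq_zero.2 (h.trans hconj.symm)]
    simp only [sub_mul, mul_sub, smul_mul_assoc, mul_smul_comm, one_mul, mul_one, sub_smul,
      smul_sub, smul_smul, mul_comm μ]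
    abel
  exact sub_eq_zero.1 ((smul_eq_zero.1 hdiff).resolve_left (sub_ne_zero.2 hμ))

section Intertwining

variable {ι m n K : Type*} [Semiring K] [Fintype m] [Fintype n] [DecidableEq m] [DecidableEq n]
  {R : ι → Matrix n n K} {r : ι → Matrix m m K} {F : Matrix n m K}

lemma freeMonoid_lift_mul_eq_mul_lift (hR : ∀ i, R i * F = F * r i) (w : FreeMonoid ι) :
    FreeMonoid.lift R w * F = F * FreeMonoid.lift r w := by
  induction w using FreeMonoid.inductionOn with
  | one => simp only [map_one, Matrix.one_mul, Matrix.mul_one]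
  | of i => simpa only [FreeMonoid.lift_eval_of] using hR i
  | mul w w' ih ih' =>
    rw [map_mul, map_mul, Matrix.mul_assoc, ih', ← Matrix.mul_assoc, ih, Matrix.mul_assoc]

theorem mem_closure_range_iff_exists_mulVec_eq (hF : Function.Injective F.mulVec)
    (hR : ∀ i, R i * F = F * r i) {B : Matrix m m K} :
    B ∈ Submonoid.closure (Set.range r) ↔
      ∃ A ∈ Submonoid.closure (Set.range R), ∀ t, A *ᵥ F *ᵥ t = F *ᵥ B *ᵥ t := by
  simp only [← FreeMonoid.mrange_lift, MonoidHom.mem_mrange]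
  constructor
  · rintro ⟨w, rfl⟩
    refine ⟨_, ⟨w, rfl⟩, fun t => ?_⟩
    rw [mulVec_mulVec, freeMonoid_lift_mul_eq_mul_lift hR, ← mulVec_mulVec]
  · rintro ⟨_, ⟨w, rfl⟩, h⟩
    refine ⟨w, Matrix.mulVec_injective (funext fun t => hF ?_)⟩
    rw [← h t, mulVec_mulVec, mulVec_mulVec, freeMonoid_lift_mul_eq_mul_lift hR]

end Intertwining

lemma mulVec_injective_of_mul_eq_smul_one {m n K : Type*} [Field K] [Fintype m] [Fintype n]
    [DecidableEq m] {L : Matrix m n K} {F : Matrix n m K} {c : K} (hc : c ≠ 0)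
    (h : L * F = c • 1) : Function.Injective F.mulVec := by
  intro v w hvw
  have hscaled := congrArg (L *ᵥ ·) hvw
  simp only [mulVec_mulVec, h, smul_mulVec, one_mulVec] at hscaled
  exact smul_right_injective _ hc hscaled

/-! ### The centralizer of `g²` in `W(F₄)` -/

/-- The reflections `s(β₁), …, s(β₄)` generating `G₂₈`. Their entries are rational, and the group
is studied over `ℚ`, where identities between explicit matrices are decidable. -/
def simpleReflection : Fin 4 → Matrix (Fin 4) (Fin 4) ℚ :=
  ![!![0, 1, 0, 0; 1, 0, 0, 0; 0, 0, 1, 0; 0, 0, 0, 1],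
    !![1, 0, 0, 0; 0, 0, 1, 0; 0, 1, 0, 0; 0, 0, 0, 1],
    !![1, 0, 0, 0; 0, 1, 0, 0; 0, 0, -1, 0; 0, 0, 0, 1],
    (1 / 2 : ℚ) • !![1, -1, -1, -1; -1, 1, -1, -1; -1, -1, 1, -1; -1, -1, -1, 1]]

/-- The group `G₂₈ = W(F₄)`, realised by rational matrices. -/
def weylF4 : Submonoid (Matrix (Fin 4) (Fin 4) ℚ) :=
  Submonoid.closure (Set.range simpleReflection)

/-- The square `g²` of the Coxeter element. -/
def coxeterSq : Matrix (Fin 4) (Fin 4) ℚ :=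
  (simpleReflection 0 * simpleReflection 1 * simpleReflection 2 * simpleReflection 3) ^ 2

/-- Two elements of order `3` of `G₂₈` that commute with `g²`; on the eigenspace `E` they act as the
generators `r₁` and `r₂'` of `G₅`. -/
def rotation : Fin 2 → Matrix (Fin 4) (Fin 4) ℚ :=
  ![simpleReflection 3 * simpleReflection 1 * simpleReflection 2 * simpleReflection 1,
    simpleReflection 2 * simpleReflection 1 * simpleReflection 2 * simpleReflection 0]

/-- The group generated by the two rotations, which is `G₅` in its action on `E`. -/
def rotationGroup : Submonoid (Matrix (Fin 4) (Fin 4) ℚ) :=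
  Submonoid.closure (Set.range rotation)

/-- The `24` short roots `±eᵢ` and `(±1, ±1, ±1, ±1) / 2` of `F₄`, enumerated as the halves of the
integer vectors of squared length `4`. -/
def shortRoots : Finset (Fin 4 → ℚ) :=
  ((Fintype.piFinset fun _ => Finset.Icc (-2 : ℤ) 2).filter fun x => x ⬝ᵥ x = 4).image
    fun x i => x i / 2

lemma simpleReflection_mem_weylF4 (i : Fin 4) : simpleReflection i ∈ weylF4 :=
  Submonoid.subset_closure (Set.mem_range_self i)

lemma rotation_mem_rotationGroup (i : Fin 2) : rotation i ∈ rotationGroup :=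
  Submonoid.subset_closure (Set.mem_range_self i)

lemma transpose_mul_self_of_mem_weylF4 {M : Matrix (Fin 4) (Fin 4) ℚ} (hM : M ∈ weylF4) :
    Mᵀ * M = 1 := by
  have hle : weylF4 ≤ orthogonalGroup (Fin 4) ℚ := by
    refine Submonoid.closure_le.2 (Set.range_subset_iff.2 fun i => ?_)
    exact (mem_orthogonalGroup_iff' ..).2 (by revert i; decide +kernel)
  exact (mem_orthogonalGroup_iff' ..).1 (hle hM)

lemma mulVec_mem_shortRoots {M : Matrix (Fin 4) (Fin 4) ℚ} (hM : M ∈ weylF4)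
    {v : Fin 4 → ℚ} (hv : v ∈ shortRoots) : M *ᵥ v ∈ shortRoots := by
  induction hM using Submonoid.closure_induction generalizing v with
  | mem _ h =>
    obtain ⟨i, rfl⟩ := h
    revert i v
    decide +kernel
  | one => rwa [one_mulVec]
  | mul A B _ _ ihA ihB => exact mulVec_mulVec v A B ▸ ihA (ihB hv)

lemma rotationGroup_le_weylF4 : rotationGroup ≤ weylF4 := by
  refine Submonoid.closure_le.2 (Set.range_subset_iff.2 fun i => ?_)
  have h := simpleReflection_mem_weylF4
  fin_cases i
  · exact mul_mem (mul_mem (mul_mem (h 3) (h 1)) (h 2)) (h 1)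
  · exact mul_mem (mul_mem (mul_mem (h 2) (h 1)) (h 2)) (h 0)

lemma commute_coxeterSq_of_mem_rotationGroup {M : Matrix (Fin 4) (Fin 4) ℚ}
    (hM : M ∈ rotationGroup) : Commute M coxeterSq := by
  induction hM using Submonoid.closure_induction with
  | mem _ h =>
    obtain ⟨i, rfl⟩ := h
    exact (commute_iff_eq _ _).2 (by revert i; decide +kernel)
  | one => exact Commute.one_left coxeterSq
  | mul A B _ _ ihA ihB => exact ihA.mul_left ihB

lemma coxeterSq_mem_rotationGroup : coxeterSq ∈ rotationGroup := by
  have h : coxeterSq = (rotation 1 ^ 2 * rotation 0 ^ 2) ^ 2 := by decide +kernel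
  have hR := rotation_mem_rotationGroup
  exact h ▸ pow_mem (mul_mem (pow_mem (hR 1) 2) (pow_mem (hR 0) 2)) 2

lemma transpose_mem_rotationGroup {M : Matrix (Fin 4) (Fin 4) ℚ} (hM : M ∈ rotationGroup) :
    Mᵀ ∈ rotationGroup := by
  induction hM using Submonoid.closure_induction with
  | mem _ h =>
    obtain ⟨i, rfl⟩ := h
    have hsq : (rotation i)ᵀ = rotation i ^ 2 := by revert i; decide +kernel
    exact hsq ▸ pow_mem (rotation_mem_rotationGroup i) 2
  | one =>
    rw [transpose_one]
    exact one_mem rotationGroup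
  | mul A B _ _ ihA ihB => exact transpose_mul A B ▸ mul_mem ihB ihA

lemma exists_mem_rotationGroup_mulVec_eq {v : Fin 4 → ℚ} (hv : v ∈ shortRoots) :
    ∃ W ∈ rotationGroup, W *ᵥ Pi.single 3 1 = v := by
  have htransversal : ∀ v ∈ shortRoots, ∃ k : Fin 6, ∃ l : Fin 3, ∃ m : Fin 2,
      (coxeterSq ^ (k : ℕ) * rotation 1 ^ (l : ℕ) * rotation 0 ^ (m : ℕ)) *ᵥ Pi.single 3 1 = v := by
    decide +kernel
  obtain ⟨k, l, m, h⟩ := htransversal v hv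
  have hR := rotation_mem_rotationGroup
  exact ⟨_, mul_mem (mul_mem (pow_mem coxeterSq_mem_rotationGroup k) (pow_mem (hR 1) l))
    (pow_mem (hR 0) m), h⟩

lemma eq_of_commute_coxeterSq {A B : Matrix (Fin 4) (Fin 4) ℚ} (hA : Commute A coxeterSq)
    (hB : Commute B coxeterSq) (h0 : A *ᵥ Pi.single 0 1 = B *ᵥ Pi.single 0 1)
    (h3 : A *ᵥ Pi.single 3 1 = B *ᵥ Pi.single 3 1) : A = B := by
  have hcox {v : Fin 4 → ℚ} (hv : A *ᵥ v = B *ᵥ v) :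
      A *ᵥ (coxeterSq *ᵥ v) = B *ᵥ (coxeterSq *ᵥ v) := by
    rw [mulVec_mulVec, mulVec_mulVec, hA.eq, hB.eq, ← mulVec_mulVec, hv, mulVec_mulVec]
  have he1 : (Pi.single 1 1 : Fin 4 → ℚ) =
      coxeterSq *ᵥ Pi.single 0 1 + coxeterSq *ᵥ Pi.single 3 1 - Pi.single 0 1 := by
    decide +kernel
  have he2 : (Pi.single 2 1 : Fin 4 → ℚ) =
      coxeterSq *ᵥ Pi.single 0 1 - coxeterSq *ᵥ Pi.single 3 1 + Pi.single 3 1 := by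
    decide +kernel
  refine ext_of_mulVec_single fun i => ?_
  fin_cases i
  · exact h0
  · change A *ᵥ Pi.single 1 1 = B *ᵥ Pi.single 1 1
    rw [he1, mulVec_sub, mulVec_add, mulVec_sub, mulVec_add, hcox h0, hcox h3, h0]
  · change A *ᵥ Pi.single 2 1 = B *ᵥ Pi.single 2 1
    rw [he2, mulVec_add, mulVec_sub, mulVec_add, mulVec_sub, hcox h0, hcox h3, h3]
  · exact h3

lemma mem_rotationGroup_of_mulVec_single_eq {N : Matrix (Fin 4) (Fin 4) ℚ} (hN : N ∈ weylF4)
    (hcomm : Commute N coxeterSq) (hfix : N *ᵥ Pi.single 3 1 = Pi.single 3 1) :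
    N ∈ rotationGroup := by
  have hinner (v w : Fin 4 → ℚ) : N *ᵥ v ⬝ᵥ N *ᵥ w = v ⬝ᵥ w := by
    rw [dotProduct_mulVec, vecMul_mulVec, transpose_mul_self_of_mem_weylF4 hN, vecMul_one]
  have hshort : N *ᵥ Pi.single 0 1 ∈ shortRoots := mulVec_mem_shortRoots hN (by decide +kernel)
  have horth : N *ᵥ Pi.single 0 1 ⬝ᵥ Pi.single 3 1 = 0 := by
    rw [← hfix, hinner]
    decide +kernel
  have hangle : N *ᵥ Pi.single 0 1 ⬝ᵥ coxeterSq *ᵥ Pi.single 3 1 = 1 / 2 := by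
    rw [← hfix, mulVec_mulVec, ← hcomm.eq, ← mulVec_mulVec, hinner]
    decide +kernel
  have hcandidates : ∀ u ∈ shortRoots, u ⬝ᵥ Pi.single 3 1 = 0 →
      u ⬝ᵥ coxeterSq *ᵥ Pi.single 3 1 = 1 / 2 →
      ∃ k : Fin 3, u = (rotation 1 ^ (k : ℕ)) *ᵥ Pi.single 0 1 := by
    decide +kernel
  obtain ⟨k, hk⟩ := hcandidates _ hshort horth hangle
  have hrot : rotation 1 ^ (k : ℕ) ∈ rotationGroup := pow_mem (rotation_mem_rotationGroup 1) k
  have hrotfix : (rotation 1 ^ (k : ℕ)) *ᵥ Pi.single 3 1 = Pi.single 3 1 := by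
    clear * -
    revert k
    decide +kernel
  exact eq_of_commute_coxeterSq hcomm (commute_coxeterSq_of_mem_rotationGroup hrot) hk
    (hfix.trans hrotfix.symm) ▸ hrot

theorem mem_rotationGroup_iff {M : Matrix (Fin 4) (Fin 4) ℚ} :
    M ∈ rotationGroup ↔ M ∈ weylF4 ∧ Commute M coxeterSq := by
  refine ⟨fun hM => ⟨rotationGroup_le_weylF4 hM, commute_coxeterSq_of_mem_rotationGroup hM⟩, ?_⟩
  rintro ⟨hM, hcomm⟩
  have hshort : M *ᵥ Pi.single 3 1 ∈ shortRoots := mulVec_mem_shortRoots hM (by decide +kernel)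
  obtain ⟨W, hW, hWM⟩ := exists_mem_rotationGroup_mulVec_eq hshort
  have hWt := transpose_mem_rotationGroup hW
  have hWtW : Wᵀ * W = 1 := transpose_mul_self_of_mem_weylF4 (rotationGroup_le_weylF4 hW)
  have hN : Wᵀ * M ∈ rotationGroup := by
    refine mem_rotationGroup_of_mulVec_single_eq
      (mul_mem (rotationGroup_le_weylF4 hWt) hM)
      ((commute_coxeterSq_of_mem_rotationGroup hWt).mul_left hcomm) ?_
    rw [← mulVec_mulVec, ← hWM, mulVec_mulVec, hWtW, one_mulVec]
  rw [← one_mul M, ← mul_eq_one_comm.1 hWtW, mul_assoc]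
  exact mul_mem hW hN

/-! ### The eigenspace of `g²` -/

/-- A rational matrix viewed as a complex matrix. -/
def toComplex {n : ℕ} : Matrix (Fin n) (Fin n) ℚ →+* Matrix (Fin n) (Fin n) ℂ :=
  (algebraMap ℚ ℂ).mapMatrix

lemma toComplex_injective {n : ℕ} :
    Function.Injective (toComplex : Matrix (Fin n) (Fin n) ℚ → Matrix (Fin n) (Fin n) ℂ) :=
  Matrix.map_injective (algebraMap ℚ ℂ).injective

lemma map_conj_toComplex {n : ℕ} (M : Matrix (Fin n) (Fin n) ℚ) :
    (toComplex M).map (starRingEnd ℂ) = toComplex M := by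
  ext i j
  simp [toComplex]

lemma closure_range_toComplex {n : ℕ} {ι : Type*} (R : ι → Matrix (Fin n) (Fin n) ℚ) :
    Submonoid.closure (Set.range fun i => toComplex (R i)) =
      (Submonoid.closure (Set.range R)).map toComplex := by
  rw [MonoidHom.map_mclosure, ← Set.range_comp]
  rfl

lemma reflMat_eq_toComplex_simpleReflection {β : Fin 4 → Fin 4 → ℂ}
    (hβ0 : β 0 = ![1, -1, 0, 0])
    (hβ1 : β 1 = ![0, 1, -1, 0])
    (hβ2 : β 2 = ![0, 0, (Real.sqrt 2 : ℂ), 0])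
    (hβ3 : β 3 = ![-(1 / (Real.sqrt 2 : ℂ)), -(1 / (Real.sqrt 2 : ℂ)),
      -(1 / (Real.sqrt 2 : ℂ)), -(1 / (Real.sqrt 2 : ℂ))]) (i : Fin 4) :
    reflMat (β i) (-1) = toComplex (simpleReflection i) := by
  have hsqrt : (Real.sqrt 2 : ℂ) ≠ 0 := by simp
  have hβ2' : β 2 = (Real.sqrt 2 : ℂ) • ![0, 0, 1, 0] := by simp [hβ2]
  have hβ3' : β 3 = (-(1 / (Real.sqrt 2 : ℂ))) • ![1, 1, 1, 1] := by simp [hβ3]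
  have hrescale : reflMat (β i) (-1) =
      reflMat (![![1, -1, 0, 0], ![0, 1, -1, 0], ![0, 0, 1, 0], ![1, 1, 1, 1]] i) (-1) := by
    fin_cases i
    · exact congrArg (reflMat · (-1)) hβ0
    · exact congrArg (reflMat · (-1)) hβ1
    · exact (congrArg (reflMat · (-1)) hβ2').trans (reflMat_smul hsqrt _ _)
    · exact (congrArg (reflMat · (-1)) hβ3').trans
        (reflMat_smul (neg_ne_zero.2 (one_div_ne_zero hsqrt)) _ _)
  rw [hrescale]
  ext j k
  fin_cases i <;> fin_cases j <;> fin_cases k <;>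
    simp [reflMat, herm, Fin.sum_univ_four, simpleReflection, toComplex] <;> norm_num

/-- The primitive sixth root of unity `ζ² = e^{πi/3}`, the eigenvalue of `g²` on `E`. -/
def zetaSq : ℂ := (1 + √3 * Complex.I) / 2

lemma exp_pi_mul_I_div_six_sq : Complex.exp (Real.pi * Complex.I / 6) ^ 2 = zetaSq := by
  have harg : (2 : ℕ) * (Real.pi * Complex.I / 6) = (Real.pi / 3 : ℝ) * Complex.I := by
    push_cast
    ring
  rw [← Complex.exp_nat_mul, harg, Complex.exp_mul_I, ← Complex.ofReal_cos, ← Complex.ofReal_sin,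
    Real.cos_pi_div_three, Real.sin_pi_div_three, zetaSq]
  push_cast
  ring

lemma sqrt_three_sq : (√3 : ℂ) ^ 2 = 3 := by
  rw [← Complex.ofReal_pow, Real.sq_sqrt zero_le_three, Complex.ofReal_ofNat]

lemma conj_zetaSq : starRingEnd ℂ zetaSq = 1 - zetaSq := by
  simp only [zetaSq, map_div₀, map_add, map_mul, map_one, Complex.conj_ofReal, Complex.conj_I,
    map_ofNat]
  ring

lemma zetaSq_sq : zetaSq ^ 2 = zetaSq - 1 := by
  rw [zetaSq]
  linear_combination (-1 / 4 : ℂ) * sqrt_three_sq + √3 ^ 2 / 4 * Complex.I_sq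

lemma exp_two_pi_mul_I_div_three :
    Complex.exp (2 * Real.pi * Complex.I / 3) = zetaSq - 1 := by
  have harg : 2 * Real.pi * Complex.I / 3 = (2 : ℕ) * ((2 : ℕ) * (Real.pi * Complex.I / 6)) := by
    push_cast
    ring
  rw [harg, Complex.exp_nat_mul, Complex.exp_nat_mul, exp_pi_mul_I_div_six_sq, zetaSq_sq]

lemma conj_zetaSq_ne : starRingEnd ℂ zetaSq ≠ zetaSq := by
  intro h
  have him := Complex.conj_eq_iff_im.1 h
  simp [zetaSq] at him

lemma toComplex_coxeterSq_sub_mul_sub :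
    (toComplex coxeterSq - zetaSq • 1) * (toComplex coxeterSq - starRingEnd ℂ zetaSq • 1) = 0 := by
  have hminpoly : toComplex coxeterSq ^ 2 = toComplex coxeterSq - 1 := by
    rw [← map_pow, show coxeterSq ^ 2 = coxeterSq - 1 by decide +kernel, map_sub, map_one]
  have hprod : zetaSq * (1 - zetaSq) = 1 := by linear_combination -zetaSq_sq
  rw [conj_zetaSq, sub_mul, mul_sub, mul_sub, ← pow_two, hminpoly, smul_mul_smul_comm, hprod,
    smul_mul_assoc, one_mul, mul_smul_comm, mul_one, mul_one]
  module

lemma commute_coxeterSq_iff {M : Matrix (Fin 4) (Fin 4) ℚ} :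
    Commute M coxeterSq ↔ ∀ v ∈ eigSpace (toComplex coxeterSq) zetaSq,
      toComplex M *ᵥ v ∈ eigSpace (toComplex coxeterSq) zetaSq := by
  refine ⟨fun h v hv => mulVec_mem_eigSpace_of_commute (h.map toComplex) hv, fun h => ?_⟩
  have hcomm := commute_of_mapsTo_eigSpace conj_zetaSq_ne toComplex_coxeterSq_sub_mul_sub
    (map_conj_toComplex _) (map_conj_toComplex M) h
  exact hcomm.of_map toComplex_injective

/-- The generators `r₁` and `r₂'` of `G₅`. -/
def generatorG5 : Fin 2 → Matrix (Fin 2) (Fin 2) ℂ :=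
  ![((zetaSq - 1) / 2) • !![-1 - Complex.I, 1 - Complex.I; -1 - Complex.I, -1 + Complex.I],
    ((zetaSq - 1) / 2) • !![-1 + Complex.I, 1 - Complex.I; -1 - Complex.I, -1 - Complex.I]]

/-- The isomorphism `ℂ² ≅ E`, as a `4 × 2` matrix. It is determined up to a scalar by the condition
that it carries `r₁` and `r₂'` to the two rotations. -/
def embedding : Matrix (Fin 4) (Fin 2) ℂ :=
  !![1 - Complex.I, (√3 - 1) * Complex.I;
    -(√3 - 1), 1 + Complex.I;
    -1 - Complex.I, -(√3 - 1);
    (√3 - 1) * Complex.I, -1 + Complex.I]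

lemma toComplex_rotation_mul_embedding (i : Fin 2) :
    toComplex (rotation i) * embedding = embedding * generatorG5 i := by
  have hrot : rotation i =
      ![(1 / 2 : ℚ) • !![1, 1, -1, -1; -1, -1, -1, -1; -1, 1, 1, -1; -1, 1, -1, 1],
        !![0, 1, 0, 0; 0, 0, -1, 0; -1, 0, 0, 0; 0, 0, 0, 1]] i := by
    revert i
    decide +kernel
  have h3 := sqrt_three_sq
  have hI := Complex.I_sq
  rw [hrot]
  ext j k
  fin_cases i <;> fin_cases j <;> fin_cases k <;>
    simp [toComplex, embedding, generatorG5, zetaSq, Matrix.mul_apply, Fin.sum_univ_four] <;>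
    grind

lemma toComplex_coxeterSq : toComplex coxeterSq =
    (1 / 2 : ℂ) • !![1, -1, -1, 1; 1, 1, 1, 1; 1, -1, 1, -1; -1, -1, 1, 1] := by
  have hcox : coxeterSq =
      (1 / 2 : ℚ) • !![1, -1, -1, 1; 1, 1, 1, 1; 1, -1, 1, -1; -1, -1, 1, 1] := by
    decide +kernel
  rw [hcox]
  ext i j
  fin_cases i <;> fin_cases j <;> simp [toComplex]

lemma toComplex_coxeterSq_mul_embedding :
    toComplex coxeterSq * embedding = zetaSq • embedding := by
  have h3 := sqrt_three_sq
  have hI := Complex.I_sq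
  rw [toComplex_coxeterSq]
  ext i j
  fin_cases i <;> fin_cases j <;>
    simp [embedding, zetaSq, Matrix.mul_apply, Fin.sum_univ_four] <;> grind

lemma embedding_conjTranspose_mul_self :
    embeddingᴴ * embedding = (12 - 4 * √3 : ℂ) • 1 := by
  have h3 := sqrt_three_sq
  have hI := Complex.I_sq
  ext i j
  fin_cases i <;> fin_cases j <;>
    simp [embedding, Matrix.mul_apply, Fin.sum_univ_four] <;> grind

lemma embedding_mul_conjTranspose_self : embedding * embeddingᴴ =
    (-4 * Complex.I * (√3 - 1)) • (toComplex coxeterSq - starRingEnd ℂ zetaSq • 1) := by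
  have h3 := sqrt_three_sq
  have hI := Complex.I_sq
  rw [toComplex_coxeterSq, conj_zetaSq, zetaSq]
  ext i j
  fin_cases i <;> fin_cases j <;>
    simp [embedding, Matrix.mul_apply, Fin.sum_univ_two] <;> grind

lemma twelve_sub_four_mul_sqrt_three_ne_zero : (12 - 4 * √3 : ℂ) ≠ 0 := by
  intro h
  have hsqrt : (√3 : ℂ) = 3 := by linear_combination (-1 / 4 : ℂ) * h
  have hsq := sqrt_three_sq
  rw [hsqrt] at hsq
  norm_num at hsq

lemma embedding_mulVec_injective : Function.Injective embedding.mulVec :=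
  mulVec_injective_of_mul_eq_smul_one twelve_sub_four_mul_sqrt_three_ne_zero
    embedding_conjTranspose_mul_self

lemma range_embedding :
    LinearMap.range embedding.mulVecLin = eigSpace (toComplex coxeterSq) zetaSq := by
  ext v
  rw [LinearMap.mem_range, mem_eigSpace]
  constructor
  · rintro ⟨t, rfl⟩
    rw [mulVecLin_apply, mulVec_mulVec, toComplex_coxeterSq_mul_embedding, smul_mulVec]
  · intro hv
    have hproj : embedding *ᵥ (embeddingᴴ *ᵥ v) = (12 - 4 * √3 : ℂ) • v := by
      rw [mulVec_mulVec, embedding_mul_conjTranspose_self, smul_mulVec, sub_mulVec, smul_mulVec,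
        one_mulVec, hv, ← sub_smul, smul_smul, conj_zetaSq, zetaSq]
      congr 1
      linear_combination (-4 * (√3 ^ 2 - √3) : ℂ) * Complex.I_sq + 4 * sqrt_three_sq
    refine ⟨(12 - 4 * √3 : ℂ)⁻¹ • (embeddingᴴ *ᵥ v), ?_⟩
    rw [map_smul, mulVecLin_apply, hproj, inv_smul_smul₀ twelve_sub_four_mul_sqrt_three_ne_zero]

theorem mem_closure_generatorG5_iff {B : Matrix (Fin 2) (Fin 2) ℂ} :
    B ∈ Submonoid.closure (Set.range generatorG5) ↔
      ∃ M ∈ weylF4.map toComplex,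
        (∀ v ∈ eigSpace (toComplex coxeterSq) zetaSq,
          M *ᵥ v ∈ eigSpace (toComplex coxeterSq) zetaSq) ∧
        ∀ t, M *ᵥ embedding *ᵥ t = embedding *ᵥ B *ᵥ t := by
  rw [mem_closure_range_iff_exists_mulVec_eq embedding_mulVec_injective
    toComplex_rotation_mul_embedding, closure_range_toComplex, ← rotationGroup]
  simp only [Submonoid.mem_map, mem_rotationGroup_iff, commute_coxeterSq_iff]
  constructor
  · rintro ⟨_, ⟨M, ⟨hM, hE⟩, rfl⟩, h⟩
    exact ⟨_, ⟨M, hM, rfl⟩, hE, h⟩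
  · rintro ⟨_, ⟨M, hM, rfl⟩, hE, h⟩
    exact ⟨_, ⟨M, ⟨hM, hE⟩, rfl⟩, h⟩

/-- The `6`-reflection subquotient of `G₂₈ = F₄` is isomorphic to `G₅`:
with `ζ = e^{πi/6}`, `ω = e^{2πi/3}`, the Coxeter element `g` of `F₄`, and `E` the
`ζ^2`-eigenspace of `g^2` (a `2`-dimensional subspace), there is a `ℂ`-linear
isomorphism `ψ : E ≅ ℂ^2` conjugating `π_E(N_E)` onto `G₅`. -/
theorem statement_14 (ζ ω : ℂ) (hζ : ζ = Complex.exp (Real.pi * Complex.I / 6))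
    (hω : ω = Complex.exp (2 * Real.pi * Complex.I / 3))
    (β : Fin 4 → (Fin 4 → ℂ))
    (hβ0 : β 0 = ![1, -1, 0, 0])
    (hβ1 : β 1 = ![0, 1, -1, 0])
    (hβ2 : β 2 = ![0, 0, (Real.sqrt 2 : ℂ), 0])
    (hβ3 : β 3 = ![-(1 / (Real.sqrt 2 : ℂ)), -(1 / (Real.sqrt 2 : ℂ)),
      -(1 / (Real.sqrt 2 : ℂ)), -(1 / (Real.sqrt 2 : ℂ))])
    (G28 : Submonoid (Matrix (Fin 4) (Fin 4) ℂ))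
    (hG28 : G28 = Submonoid.closure {M | ∃ i : Fin 4, M = reflMat (β i) (-1)})
    (g : Matrix (Fin 4) (Fin 4) ℂ)
    (hg : g = reflMat (β 0) (-1) * reflMat (β 1) (-1) * reflMat (β 2) (-1) *
      reflMat (β 3) (-1))
    (E : Submodule ℂ (Fin 4 → ℂ)) (hE : E = eigSpace (g ^ 2) (ζ ^ 2))
    (r₁ r₂' : Matrix (Fin 2) (Fin 2) ℂ)
    (hr₁ : r₁ = (ω / 2) • !![-1 - Complex.I, 1 - Complex.I;
      -1 - Complex.I, -1 + Complex.I])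
    (hr₂' : r₂' = (ω / 2) • !![-1 + Complex.I, 1 - Complex.I;
      -1 - Complex.I, -1 - Complex.I])
    (G5 : Submonoid (Matrix (Fin 2) (Fin 2) ℂ))
    (hG5 : G5 = Submonoid.closure {r₁, r₂'}) :
    Module.finrank ℂ E = 2 ∧
    ∃ Φ : (Fin 2 → ℂ) →ₗ[ℂ] (Fin 4 → ℂ), Function.Injective Φ ∧
      LinearMap.range Φ = E ∧
      (G5 : Set (Matrix (Fin 2) (Fin 2) ℂ)) =
        {M' | ∃ M ∈ G28, (∀ v ∈ E, M.mulVec v ∈ E) ∧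
          ∀ t : Fin 2 → ℂ, M.mulVec (Φ t) = Φ (M'.mulVec t)} := by
  have hrefl := reflMat_eq_toComplex_simpleReflection hβ0 hβ1 hβ2 hβ3
  have hG28' : G28 = weylF4.map toComplex := by
    rw [hG28, weylF4, ← closure_range_toComplex]
    simp only [hrefl, Set.range, eq_comm]
  have hE' : E = eigSpace (toComplex coxeterSq) zetaSq := by
    rw [hE, hg, hζ, exp_pi_mul_I_div_six_sq]
    simp only [hrefl, coxeterSq, map_pow, map_mul]
  have hG5' : G5 = Submonoid.closure (Set.range generatorG5) := by
    rw [hG5, hr₁, hr₂', hω, exp_two_pi_mul_I_div_three, generatorG5, range_cons_cons_empty]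
  have hinj : Function.Injective embedding.mulVecLin := embedding_mulVec_injective
  have hrange : LinearMap.range embedding.mulVecLin = E := hE' ▸ range_embedding
  refine ⟨?_, embedding.mulVecLin, hinj, hrange, ?_⟩
  · rw [← hrange, LinearMap.finrank_range_of_inj hinj, Module.finrank_fin_fun]
  · ext B
    rw [hG5', hG28', hE']
    exact mem_closure_generatorG5_iff

end
end Paper
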